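/- Let k be a field, S and T totally ordered sets, and M a pointwise finite-dimensional, middle exact, indecomposable persistence module over S × T. Suppose there exist x ≤ x' in S and y ≤ y' in T with, setting b = (x,y'), c = (x',y), d = (x',y'), the map M_b ⊕ M_c → M_d, (m',m'') ↦ M_{db}(m') − M_{dc}(m''), not surjective. Then M ≅ k_I for a block I of type (bb), i.e., I = J_S × J_T with J_S ⊆ S and J_T ⊆ T interval filters. -/

import Mathlib

namespace PMod

variable (k : Type) [Field k]

/-- A persistence module over a preordered set `P` with values in `k`-vector spaces. -/
structure PersistenceModule (P : Type) [Preorder P] where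
  V : P → Type
  [addCommGroup : ∀ x, AddCommGroup (V x)]
  [module : ∀ x, Module k (V x)]
  map : ∀ {x y : P}, x ≤ y → (V x →ₗ[k] V y)
  map_refl : ∀ x : P, map (le_refl x) = LinearMap.id
  map_trans : ∀ {x y z : P} (hxy : x ≤ y) (hyz : y ≤ z),
      map (le_trans hxy hyz) = (map hyz).comp (map hxy)

attribute [instance] PersistenceModule.addCommGroup PersistenceModule.module

variable {k}

/-- A morphism of persistence modules. -/
structure Hom {P : Type} [Preorder P] (M N : PersistenceModule k P) where
  app : ∀ x, M.V x →ₗ[k] N.V x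
  natural : ∀ {x y : P} (h : x ≤ y), (N.map h).comp (app x) = (app y).comp (M.map h)

/-- A morphism of persistence modules is an isomorphism iff it is pointwise bijective. -/
def IsIsoHom {P : Type} [Preorder P] {M N : PersistenceModule k P} (f : Hom M N) : Prop :=
  ∀ x, Function.Bijective (f.app x)

/-- Two persistence modules are isomorphic if there is a pointwise bijective
morphism between them. -/
def Isomorphic {P : Type} [Preorder P] (M N : PersistenceModule k P) : Prop :=
  ∃ f : Hom M N, IsIsoHom f

/-- The direct sum of a family of persistence modules, taken pointwise
(`Π₀` is the finitely supported product, i.e. the direct sum). -/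
noncomputable def directSum {P : Type} [Preorder P] {ι : Type}
    (N : ι → PersistenceModule k P) : PersistenceModule k P where
  V x := Π₀ i, (N i).V x
  map {x y} h := DFinsupp.mapRange.linearMap (fun i => (N i).map h)
  map_refl x := by
    have h : (fun i => (N i).map (le_refl x)) =
        fun i => (LinearMap.id : (N i).V x →ₗ[k] (N i).V x) :=
      funext fun i => (N i).map_refl x
    rw [h]
    exact DFinsupp.mapRange.linearMap_id
  map_trans {x y z} hxy hyz := by
    have h : (fun i => (N i).map (le_trans hxy hyz)) =
        fun i => ((N i).map hyz).comp ((N i).map hxy) :=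
      funext fun i => (N i).map_trans hxy hyz
    rw [h]
    exact DFinsupp.mapRange.linearMap_comp _ _

/-- The binary direct sum of two persistence modules, taken pointwise. -/
def sum2 {P : Type} [Preorder P] (M N : PersistenceModule k P) : PersistenceModule k P where
  V x := M.V x × N.V x
  map h := (M.map h).prodMap (N.map h)
  map_refl x := by
    rw [M.map_refl, N.map_refl]
    exact LinearMap.prodMap_id
  map_trans hxy hyz := by
    rw [M.map_trans hxy hyz, N.map_trans hxy hyz]
    exact (LinearMap.prodMap_comp _ _ _ _).symm

/-- The zero persistence module predicate. -/
def IsZero {P : Type} [Preorder P] (M : PersistenceModule k P) : Prop :=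
  ∀ x, ∀ v : M.V x, v = 0

/-- A persistence module is indecomposable if it is nonzero and whenever it is
isomorphic to a direct sum of two modules, one of the summands is zero. -/
def Indecomposable {P : Type} [Preorder P] (M : PersistenceModule k P) : Prop :=
  ¬ IsZero M ∧ ∀ M' M'' : PersistenceModule k P,
    Isomorphic M (sum2 M' M'') → IsZero M' ∨ IsZero M''

variable (k)

/-- A subset of a preordered set is convex. -/
def IsConvex {P : Type} [Preorder P] (I : Set P) : Prop :=
  ∀ p q r : P, p ≤ q → q ≤ r → p ∈ I → r ∈ I → q ∈ I

open Classical in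
/-- The fibre of the interval module `k_I` at `x`: a copy of `k` if `x ∈ I`, else `0`. -/
noncomputable def kMod {P : Type} [Preorder P] (I : Set P) (x : P) : Submodule k k :=
  if x ∈ I then ⊤ else ⊥

/-- The canonical generator of the fibre of the interval module at a point of `I`. -/
noncomputable def kGen {P : Type} [Preorder P] {I : Set P} {x : P} (hx : x ∈ I) :
    kMod k I x :=
  ⟨1, by simp [kMod, hx]⟩

open Classical in
/-- The structure maps of the interval module. -/
noncomputable def intervalMap {P : Type} [Preorder P] (I : Set P) {x y : P} (_ : x ≤ y) :
    kMod k I x →ₗ[k] kMod k I y where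
  toFun m := if hy : y ∈ I then ⟨(m : k), by simp [kMod, hy]⟩ else 0
  map_add' a b := by
    by_cases hy : y ∈ I <;> simp [hy]
  map_smul' c a := by
    by_cases hy : y ∈ I <;> simp [hy]

theorem kMod_coe_eq_zero {P : Type} [Preorder P] {I : Set P} {x : P} (hx : x ∉ I)
    (m : kMod k I x) : (m : k) = 0 := by
  have hm := m.2
  simp only [kMod, if_neg hx, Submodule.mem_bot] at hm
  exact hm

/-- The interval module `k_I` of a convex subset `I ⊆ P`: one-dimensional with
identity structure maps on `I`, and zero outside of `I`. -/
noncomputable def intervalModule {P : Type} [Preorder P] (I : Set P) (hI : IsConvex I) :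
    PersistenceModule k P where
  V x := kMod k I x
  map h := intervalMap k I h
  map_refl x := by
    ext m
    by_cases hx : x ∈ I
    · simp [intervalMap, hx]
    · simp [intervalMap, hx, kMod_coe_eq_zero k hx m]
  map_trans {x y z} hxy hyz := by
    ext m
    by_cases hz : z ∈ I
    · by_cases hy : y ∈ I
      · simp [intervalMap, hz, hy]
      · have hx : x ∉ I := fun hx => hy (hI x y z hxy hyz hx hz)
        simp [intervalMap, hz, hy, kMod_coe_eq_zero k hx m]
    · by_cases hy : y ∈ I <;> simp [intervalMap, hz, hy]

/-- The constant persistence module `k_P` with value `k` everywhere. -/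
def constModule (P : Type) [Preorder P] : PersistenceModule k P where
  V _ := k
  map _ := LinearMap.id
  map_refl _ := rfl
  map_trans _ _ := rfl

variable {k}

/-- Connectedness of a subset of a preordered set: any two points are joined by
a finite zigzag of comparable points inside the subset. -/
def IsConn {P : Type} [Preorder P] (I : Set P) : Prop :=
  ∀ p ∈ I, ∀ q ∈ I, ∃ (n : ℕ) (r : ℕ → P), r 0 = p ∧ r n = q ∧ (∀ i ≤ n, r i ∈ I) ∧
    ∀ i < n, r i ≤ r (i + 1) ∨ r (i + 1) ≤ r i

/-- An interval in a poset: a nonempty convex connected subset. -/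
def IsInterval {P : Type} [Preorder P] (I : Set P) : Prop :=
  I.Nonempty ∧ IsConvex I ∧ IsConn I

/-- An ideal: a subset closed under going down. -/
def IsIdeal {P : Type} [Preorder P] (I : Set P) : Prop :=
  ∀ p q : P, p ≤ q → q ∈ I → p ∈ I

/-- A filter: a subset closed under going up. -/
def IsFilter {P : Type} [Preorder P] (I : Set P) : Prop :=
  ∀ p q : P, p ≤ q → p ∈ I → q ∈ I

/-- An interval in a totally ordered set: a nonempty convex subset. -/
def IsIntervalLin {P : Type} [Preorder P] (I : Set P) : Prop :=
  I.Nonempty ∧ IsConvex I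

theorem IsConvex.prod {S T : Type} [Preorder S] [Preorder T] {A : Set S} {B : Set T}
    (hA : IsConvex A) (hB : IsConvex B) : IsConvex (A ×ˢ B) := by
  intro p q r hpq hqr hp hr
  exact ⟨hA _ _ _ hpq.1 hqr.1 hp.1 hr.1, hB _ _ _ hpq.2 hqr.2 hp.2 hr.2⟩

theorem isConvex_univ {P : Type} [Preorder P] : IsConvex (Set.univ : Set P) :=
  fun _ _ _ _ _ _ _ => trivial

/-- A block in the product of two totally ordered sets. -/
def IsBlock {S T : Type} [LinearOrder S] [LinearOrder T] (I : Set (S × T)) : Prop :=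
  I.Nonempty ∧ (
    (∃ JS JT, IsIntervalLin JS ∧ IsIdeal JS ∧ IsIntervalLin JT ∧ IsIdeal JT ∧ I = JS ×ˢ JT) ∨
    (∃ JS JT, IsIntervalLin JS ∧ IsFilter JS ∧ IsIntervalLin JT ∧ IsFilter JT ∧ I = JS ×ˢ JT) ∨
    (∃ JS, IsIntervalLin JS ∧ I = JS ×ˢ (Set.univ : Set T)) ∨
    (∃ JT, IsIntervalLin JT ∧ I = (Set.univ : Set S) ×ˢ JT))

theorem IsBlock.isConvex {S T : Type} [LinearOrder S] [LinearOrder T] {I : Set (S × T)}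
    (h : IsBlock I) : IsConvex I := by
  obtain ⟨-, h | h | h | h⟩ := h
  · obtain ⟨JS, JT, hS, -, hT, -, rfl⟩ := h
    exact hS.2.prod hT.2
  · obtain ⟨JS, JT, hS, -, hT, -, rfl⟩ := h
    exact hS.2.prod hT.2
  · obtain ⟨JS, hS, rfl⟩ := h
    exact hS.2.prod isConvex_univ
  · obtain ⟨JT, hT, rfl⟩ := h
    exact isConvex_univ.prod hT.2

/-- Convexity is inherited by preimages in a subposet. -/
theorem IsConvex.preimage {P : Type} [Preorder P] {J : Set P} (hJ : IsConvex J)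
    (Q : Set P) : IsConvex {p : Q | (p : P) ∈ J} :=
  fun p q r hpq hqr hp hr => hJ p q r hpq hqr hp hr

/-- The restriction of a persistence module to a subposet. -/
def restrict {P : Type} [Preorder P] (M : PersistenceModule k P) (Q : Set P) :
    PersistenceModule k Q where
  V q := M.V q
  map h := M.map h
  map_refl q := M.map_refl q
  map_trans hxy hyz := M.map_trans hxy hyz

/-- Middle exactness for persistence modules over a product of two totally ordered sets:
for every rectangle `a = (x,y) ≤ b = (x,y'), c = (x',y) ≤ d = (x',y')` the sequence
`M_a → M_b ⊕ M_c → M_d` is exact at `M_b ⊕ M_c`. -/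
def MiddleExact {S T : Type} [Preorder S] [Preorder T]
    (M : PersistenceModule k (S × T)) : Prop :=
  ∀ (x x' : S) (y y' : T) (hx : x ≤ x') (hy : y ≤ y')
    (mb : M.V (x, y')) (mc : M.V (x', y)),
    M.map (show (x, y') ≤ (x', y') from ⟨hx, le_refl y'⟩) mb =
      M.map (show (x', y) ≤ (x', y') from ⟨le_refl x', hy⟩) mc →
    ∃ ma : M.V (x, y),
      M.map (show (x, y) ≤ (x, y') from ⟨le_refl x, hy⟩) ma = mb ∧
      M.map (show (x, y) ≤ (x', y) from ⟨hx, le_refl y⟩) ma = mc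


theorem IsIdeal.isConvex {P : Type} [Preorder P] {I : Set P} (h : IsIdeal I) : IsConvex I :=
  fun _ q r _ hqr _ hr => h q r hqr hr

theorem IsFilter.isConvex {P : Type} [Preorder P] {I : Set P} (h : IsFilter I) : IsConvex I :=
  fun p q _ hpq _ hp _ => h p q hpq hp


/-- Convexity of the preimage of a convex subset of `T` in a subposet of `S × T`. -/
theorem IsConvex.preimageSnd {S T : Type} [Preorder S] [Preorder T] {J : Set T}
    (hJ : IsConvex J) (Q : Set (S × T)) : IsConvex {p : ↥Q | (p : S × T).2 ∈ J} :=
  fun p q r hpq hqr hp hr =>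
    hJ _ _ _ (Subtype.coe_le_coe.mpr hpq).2 (Subtype.coe_le_coe.mpr hqr).2 hp hr

end PMod

/-
Write `d = (x', y')`. In the finite-dimensional space `M_d`, choose images `A` of a point `(a, y')`
and `B` of a point `(x', b)` with `A ⊔ B ≠ ⊤` as large as possible. The points of `S` whose image
together with `B` spans `M_d`, and those of `T` whose image together with `A` does, form filters
`JS` and `JT`. Let `I = JS × JT`.

Middle exactness shows that no vector of `M_d` outside `A ⊔ B` ever falls into the submodule of `M`
generated outside `I`. Passing to the direct limit of the quotient gives a compatible family `f` of
functionals on `M` that vanishes outside `I` and is nonzero at `d`. By middle exactness again `f_d`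
does not vanish on the images of the points of `I` below `d`, so by duality (here finite dimension
is used) there is a compatible family `s` of vectors on `I` with `f_d (s_d) = 1`. Then `f` and `s`
exhibit `k_I` as a retract, hence as a direct summand, of `M`.
-/

namespace PMod

section Order

theorem IsFilter.prod {P Q : Type} [Preorder P] [Preorder Q] {I : Set P} {J : Set Q}
    (hI : IsFilter I) (hJ : IsFilter J) : IsFilter (I ×ˢ J) :=
  fun _ _ h hp => ⟨hI _ _ h.1 hp.1, hJ _ _ h.2 hp.2⟩

theorem isFilter_setOf_sup_eq_top {P : Type} {L : Type*} [Preorder P] [SemilatticeSup L]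
    [OrderTop L] {A : P → L} (hA : Monotone A) (B : L) : IsFilter {p | A p ⊔ B = ⊤} :=
  fun _ _ h hp => top_le_iff.1 (hp.ge.trans (sup_le_sup_right (hA h) B))

theorem IsFilter.le_of_notMem_of_mem {P : Type} [LinearOrder P] {I : Set P} (hI : IsFilter I)
    {p q : P} (hp : p ∉ I) (hq : q ∈ I) : p ≤ q :=
  le_of_not_ge fun h => hp (hI _ _ h hq)

theorem isCodirectedOrder_of_infClosed {P : Type*} [SemilatticeInf P] {I : Set P}
    (hI : InfClosed I) : IsCodirectedOrder I :=
  ⟨fun p q => ⟨⟨p ⊓ q, hI p.2 q.2⟩, inf_le_left (a := p.1), inf_le_right (a := p.1)⟩⟩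

theorem inf_sup_sup_eq_top {L : Type*} [Lattice L] [IsModularLattice L] [OrderTop L]
    {A A₀ B B₀ : L} (hA : A ⊔ B₀ = ⊤) (hB : A₀ ⊔ B = ⊤) (hB₀ : B₀ ≤ B) :
    (A ⊓ B) ⊔ (A₀ ⊔ B₀) = ⊤ := by
  have modular : B₀ ⊔ A ⊓ B = B := by
    rw [← sup_inf_assoc_of_le A hB₀, sup_comm, hA, top_inf_eq]
  rw [sup_left_comm, sup_comm _ B₀, modular, hB]

/-- A pair of indices of two families `A`, `B` in a lattice whose join `A a ⊔ B b` is not `⊤` and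
cannot be enlarged by moving one of the two indices without becoming `⊤`. It cuts out the corner of
the block: the spanning indices are the `s` with `A s ⊔ B b = ⊤` and the `t` with
`B t ⊔ A a = ⊤`. -/
structure IsCriticalPair {S T L : Type*} [SemilatticeSup L] [OrderTop L] (A : S → L) (B : T → L)
    (a : S) (b : T) : Prop where
  sup_ne_top : A a ⊔ B b ≠ ⊤
  left_le : ∀ s, A s ⊔ B b ≠ ⊤ → A s ≤ A a ⊔ B b
  right_le : ∀ t, B t ⊔ A a ≠ ⊤ → B t ≤ A a ⊔ B b

theorem exists_isCriticalPair {S T L : Type*} [LinearOrder S] [LinearOrder T] [SemilatticeSup L]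
    [OrderTop L] [WellFoundedGT L] {A : S → L} {B : T → L} (hA : Monotone A) (hB : Monotone B)
    {s : S} {t : T} (hst : A s ⊔ B t ≠ ⊤) : ∃ a b, IsCriticalPair A B a b := by
  obtain ⟨C, ⟨a, b, rfl, hab⟩, hmax⟩ := wellFounded_gt.has_min
    {C | ∃ a b, A a ⊔ B b = C ∧ C ≠ ⊤} ⟨_, s, t, rfl, hst⟩
  refine ⟨a, b, hab, fun s hs => ?_, fun t ht => ?_⟩
  · rcases le_total s a with h | h
    · exact (hA h).trans le_sup_left
    · have hle : A a ⊔ B b ≤ A s ⊔ B b := sup_le_sup_right (hA h) _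
      exact le_sup_left.trans (hle.eq_of_not_lt (hmax _ ⟨s, b, rfl, hs⟩)).ge
  · rw [sup_comm] at ht
    rcases le_total t b with h | h
    · exact (hB h).trans le_sup_right
    · have hle : A a ⊔ B b ≤ A a ⊔ B t := sup_le_sup_left (hB h) _
      exact le_sup_right.trans (hle.eq_of_not_lt (hmax _ ⟨a, t, rfl, ht⟩)).ge

end Order

section Preorder

variable {k : Type} [Field k] {P : Type} [Preorder P]

theorem PersistenceModule.map_refl_apply (M : PersistenceModule k P) (p : P) (v : M.V p) :
    M.map (le_refl p) v = v :=
  LinearMap.congr_fun (M.map_refl p) v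

theorem PersistenceModule.map_map_apply (M : PersistenceModule k P) {p q r : P} (hpq : p ≤ q)
    (hqr : q ≤ r) (v : M.V p) : M.map hqr (M.map hpq v) = M.map (hpq.trans hqr) v :=
  (LinearMap.congr_fun (M.map_trans hpq hqr) v).symm

theorem PersistenceModule.range_map_le (M : PersistenceModule k P) {p q r : P} (hpq : p ≤ q)
    (hqr : q ≤ r) : LinearMap.range (M.map (hpq.trans hqr)) ≤ LinearMap.range (M.map hqr) := by
  rw [M.map_trans hpq hqr]
  exact LinearMap.range_comp_le_range _ _

theorem Hom.map_app {M N : PersistenceModule k P} (f : Hom M N) {p q : P} (h : p ≤ q)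
    (v : M.V p) : N.map h (f.app p v) = f.app q (M.map h v) :=
  LinearMap.congr_fun (f.natural h) v

/-- A functional on the colimit of a persistence module, given as a compatible family of
functionals. -/
structure Functional (M : PersistenceModule k P) where
  app : ∀ p, M.V p →ₗ[k] k
  app_map : ∀ {p q : P} (h : p ≤ q) (v : M.V p), app q (M.map h v) = app p v

/-- A section of a persistence module over a subset `I`: a compatible choice of vectors, that is,
an element of the limit over `I`. -/
structure SectionOn (M : PersistenceModule k P) (I : Set P) where
  val : ∀ p : I, M.V p
  map_val : ∀ {p q : I} (h : (p : P) ≤ q), M.map h (val p) = val q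

/-- A subfunctor of a persistence module: a family of subspaces stable under the structure maps. -/
structure Subfunctor (M : PersistenceModule k P) where
  carrier : ∀ p, Submodule k (M.V p)
  le_comap : ∀ {p q : P} (h : p ≤ q), carrier p ≤ (carrier q).comap (M.map h)

/-- A subfunctor as a persistence module in its own right. -/
def Subfunctor.toModule {M : PersistenceModule k P} (K : Subfunctor M) :
    PersistenceModule k P where
  V p := K.carrier p
  map h := (M.map h).restrict (K.le_comap h)
  map_refl p := LinearMap.ext fun v => Subtype.ext (M.map_refl_apply p v)
  map_trans hpq hqr := LinearMap.ext fun v => Subtype.ext (M.map_map_apply hpq hqr v).symm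

/-- The quotient of a persistence module by a subfunctor. -/
def Subfunctor.quotient {M : PersistenceModule k P} (K : Subfunctor M) :
    PersistenceModule k P where
  V p := M.V p ⧸ K.carrier p
  map {p q} h := (K.carrier p).mapQ (K.carrier q) (M.map h) (K.le_comap h)
  map_refl p := by
    refine Submodule.linearMap_qext _ (LinearMap.ext fun v => ?_)
    exact congrArg (K.carrier p).mkQ (M.map_refl_apply p v)
  map_trans hpq hqr := by
    refine Submodule.linearMap_qext _ (LinearMap.ext fun v => ?_)
    exact congrArg (Submodule.mkQ _) (M.map_map_apply hpq hqr v).symm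

/-- The kernel of a morphism of persistence modules. -/
def Hom.ker {M N : PersistenceModule k P} (f : Hom M N) : Subfunctor M where
  carrier p := LinearMap.ker (f.app p)
  le_comap {p q} h v hv := by
    rw [Submodule.mem_comap, LinearMap.mem_ker, ← f.map_app h, LinearMap.mem_ker.1 hv, map_zero]

theorem Hom.isomorphic_sum2_ker_of_rightInverse {M N : PersistenceModule k P} (f : Hom M N)
    (s : Hom N M) (hfs : ∀ p, Function.RightInverse (s.app p) (f.app p)) :
    Isomorphic M (sum2 N f.ker.toModule) := by
  have hker : ∀ p v, v - s.app p (f.app p v) ∈ f.ker.carrier p := fun p v =>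
    LinearMap.mem_ker.2 (by rw [map_sub, hfs p, sub_self])
  let proj : ∀ p, M.V p →ₗ[k] f.ker.carrier p := fun p =>
    (LinearMap.id - (s.app p).comp (f.app p)).codRestrict _ (hker p)
  refine ⟨⟨fun p => (f.app p).prod (proj p), fun {p q} h => LinearMap.ext fun v =>
    Prod.ext (f.map_app h v) (Subtype.ext ?_)⟩, fun p => ⟨?_, ?_⟩⟩
  · change M.map h (v - s.app p (f.app p v)) = M.map h v - s.app q (f.app q (M.map h v))
    rw [map_sub, s.map_app, f.map_app]
  · refine (injective_iff_map_eq_zero ((f.app p).prod (proj p))).2 fun v hv => ?_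
    have hf : f.app p v = 0 := congrArg Prod.fst hv
    have hproj : v - s.app p (f.app p v) = 0 := congrArg (fun w => (w.2 : M.V p)) hv
    rwa [hf, map_zero, sub_zero] at hproj
  · rintro ⟨n, v, hv⟩
    have hf : f.app p (s.app p n + v) = n := by
      rw [map_add, hfs p, LinearMap.mem_ker.1 hv, add_zero]
    refine ⟨s.app p n + v, Prod.ext hf (Subtype.ext ?_)⟩
    change s.app p n + v - s.app p (f.app p (s.app p n + v)) = v
    rw [hf, add_sub_cancel_left]

theorem Indecomposable.isomorphic_of_rightInverse {M N : PersistenceModule k P}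
    (hM : Indecomposable M) (hN : ¬ IsZero N) (f : Hom M N) (s : Hom N M)
    (hfs : ∀ p, Function.RightInverse (s.app p) (f.app p)) : Isomorphic M N := by
  have hker : IsZero f.ker.toModule :=
    (hM.2 _ _ (f.isomorphic_sum2_ker_of_rightInverse s hfs)).resolve_left hN
  refine ⟨f, fun p => ⟨(injective_iff_map_eq_zero (f.app p)).2 fun v hv => ?_, (hfs p).surjective⟩⟩
  exact congrArg Subtype.val (hker p ⟨v, hv⟩)

section IntervalModule

variable {I : Set P} {hI : IsConvex I}

theorem intervalMap_coe_of_mem {p q : P} (h : p ≤ q) (hq : q ∈ I) (v : kMod k I p) :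
    (intervalMap k I h v : k) = v := by
  simp [intervalMap, hq]

theorem not_isZero_intervalModule (hne : I.Nonempty) : ¬ IsZero (intervalModule k I hI) := by
  obtain ⟨p, hp⟩ := hne
  exact fun h => one_ne_zero (α := k) (congrArg Subtype.val (h p (kGen k hp)))

/-- A functional that vanishes outside `I`, as a morphism to `k_I`. -/
noncomputable def Functional.toIntervalModule {M : PersistenceModule k P} (f : Functional M)
    (hI : IsConvex I) (hf : ∀ p ∉ I, f.app p = 0) : Hom M (intervalModule k I hI) where
  app p := (f.app p).codRestrict (kMod k I p) fun v => by
    by_cases hp : p ∈ I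
    · simp [kMod, hp]
    · simp [hf p hp]
  natural {p q} h := by
    refine LinearMap.ext fun v => Subtype.ext ?_
    by_cases hq : q ∈ I
    · exact (intervalMap_coe_of_mem h hq _).trans (f.app_map h v).symm
    · exact (kMod_coe_eq_zero k hq _).trans (kMod_coe_eq_zero k hq _).symm

open Classical in
/-- The extension by zero of a section over `I` to all of `P`. -/
noncomputable def SectionOn.extend {M : PersistenceModule k P} (s : SectionOn M I) (p : P) :
    M.V p :=
  if hp : p ∈ I then s.val ⟨p, hp⟩ else 0

theorem SectionOn.extend_of_mem {M : PersistenceModule k P} (s : SectionOn M I) {p : P}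
    (hp : p ∈ I) : s.extend p = s.val ⟨p, hp⟩ :=
  dif_pos hp

/-- A section over a filter `I`, as a morphism from `k_I`. -/
noncomputable def SectionOn.ofIntervalModule {M : PersistenceModule k P} (s : SectionOn M I)
    (hI : IsConvex I) (hIf : IsFilter I) : Hom (intervalModule k I hI) M where
  app p := (LinearMap.toSpanSingleton k (M.V p) (s.extend p)).comp (kMod k I p).subtype
  natural {p q} h := by
    refine LinearMap.ext fun (v : kMod k I p) => ?_
    change M.map h ((v : k) • s.extend p) = (intervalMap k I h v : k) • s.extend q
    by_cases hp : p ∈ I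
    · have hq : q ∈ I := hIf p q h hp
      rw [map_smul, intervalMap_coe_of_mem h hq, s.extend_of_mem hp, s.extend_of_mem hq,
        s.map_val (p := ⟨p, hp⟩) (q := ⟨q, hq⟩)]
    · have hv : v = 0 := Subtype.ext (kMod_coe_eq_zero k hp v)
      simp only [hv, map_zero, ZeroMemClass.coe_zero, zero_smul]

theorem Functional.app_val_eq {M : PersistenceModule k P} [IsCodirectedOrder I]
    (f : Functional M) (s : SectionOn M I) (p q : I) :
    f.app p (s.val p) = f.app q (s.val q) := by
  obtain ⟨r, hrp, hrq⟩ := exists_le_le p q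
  rw [← s.map_val hrp, ← s.map_val hrq, f.app_map, f.app_map]

theorem Indecomposable.isomorphic_intervalModule {M : PersistenceModule k P}
    [IsCodirectedOrder I] (hM : Indecomposable M) (hI : IsConvex I) (hIf : IsFilter I)
    (f : Functional M) (hf : ∀ p ∉ I, f.app p = 0) (s : SectionOn M I) {d : I}
    (hfs : f.app d (s.val d) = 1) : Isomorphic M (intervalModule k I hI) := by
  refine hM.isomorphic_of_rightInverse (not_isZero_intervalModule ⟨d, d.2⟩)
    (f.toIntervalModule hI hf) (s.ofIntervalModule hI hIf) fun p (v : kMod k I p) =>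
      Subtype.ext ?_
  change f.app p ((v : k) • s.extend p) = v
  by_cases hp : p ∈ I
  · rw [map_smul, s.extend_of_mem hp, f.app_val_eq s ⟨p, hp⟩ d, hfs, smul_eq_mul, mul_one]
  · rw [kMod_coe_eq_zero k hp v, zero_smul, map_zero]

end IntervalModule

theorem exists_functional [IsDirectedOrder P] (M : PersistenceModule k P) {d : P} {m : M.V d}
    (hm : ∀ e (h : d ≤ e), M.map h m ≠ 0) : ∃ f : Functional M, f.app d m = 1 := by
  classical
  let φ : ∀ p q, p ≤ q → M.V p →ₗ[k] M.V q := fun _ _ h => M.map h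
  have : DirectedSystem M.V (fun p q h => φ p q h) :=
    ⟨fun p v => M.map_refl_apply p v, fun _ _ _ hpq hqr v => M.map_map_apply hpq hqr v⟩
  have hlim : Module.DirectLimit.of k P M.V φ d m ≠ 0 := fun h0 =>
    have ⟨e, h, he⟩ := Module.DirectLimit.of.zero_exact h0
    hm e h he
  obtain ⟨F, hF⟩ := Module.Projective.exists_dual_eq_one k hlim
  exact ⟨⟨fun p => F.comp (Module.DirectLimit.of k P M.V φ p),
    fun h v => congrArg F (Module.DirectLimit.of_f (f := φ) (hij := h))⟩, hF⟩

theorem Subfunctor.exists_functional [IsDirectedOrder P] {M : PersistenceModule k P}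
    (K : Subfunctor M) {d : P} {m : M.V d} (hm : ∀ e (h : d ≤ e), M.map h m ∉ K.carrier e) :
    ∃ f : Functional M, (∀ p, K.carrier p ≤ LinearMap.ker (f.app p)) ∧ f.app d m = 1 := by
  obtain ⟨g, hg⟩ := PMod.exists_functional K.quotient (m := (K.carrier d).mkQ m)
    fun e h => (Submodule.Quotient.mk_eq_zero _).not.2 (hm e h)
  refine ⟨⟨fun p => (g.app p).comp (K.carrier p).mkQ, fun {p q} h v =>
    g.app_map h ((K.carrier p).mkQ v)⟩, fun p v hv => ?_, hg⟩
  have hv0 : (K.carrier p).mkQ v = 0 := (Submodule.Quotient.mk_eq_zero _).2 hv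
  exact (congrArg (g.app p) hv0).trans (map_zero _)

/-- The pointwise dual of a persistence module, indexed by the opposite order. -/
def PersistenceModule.dual (M : PersistenceModule k P) : PersistenceModule k Pᵒᵈ where
  V p := Module.Dual k (M.V (OrderDual.ofDual p))
  map h := (M.map (OrderDual.ofDual_le_ofDual.2 h)).dualMap
  map_refl p := LinearMap.ext fun w => LinearMap.ext fun v =>
    congrArg w (M.map_refl_apply (OrderDual.ofDual p) v)
  map_trans hpq hqr := LinearMap.ext fun w => LinearMap.ext fun v =>
    congrArg w (M.map_map_apply (OrderDual.ofDual_le_ofDual.2 hqr)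
      (OrderDual.ofDual_le_ofDual.2 hpq) v).symm

theorem exists_sectionOn (M : PersistenceModule k P) {I : Set P} [IsCodirectedOrder I]
    (hfd : ∀ p : I, FiniteDimensional k (M.V p)) {d : I} {g : Module.Dual k (M.V d)}
    (hg : ∀ (p : I) (h : (p : P) ≤ d), g.comp (M.map h) ≠ 0) :
    ∃ s : SectionOn M I, g (s.val d) = 1 := by
  obtain ⟨φ, hφ⟩ := exists_functional (restrict M I).dual (d := OrderDual.toDual d) (m := g)
    fun p h => hg (OrderDual.ofDual p) h
  let φ' : ∀ p : I, Module.Dual k (Module.Dual k (M.V p)) := fun p => φ.app (OrderDual.toDual p)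
  let s : ∀ p : I, M.V p := fun p => (Module.evalEquiv k (M.V p)).symm (φ' p)
  have apply_s : ∀ (p : I) (w : Module.Dual k (M.V p)), w (s p) = φ' p w :=
    fun p w => Module.apply_evalEquiv_symm_apply k _ w (φ' p)
  refine ⟨⟨s, fun {p q} h => (Module.evalEquiv k (M.V q)).injective (LinearMap.ext fun w => ?_)⟩,
    (apply_s d g).trans hφ⟩
  calc w (M.map h (s p)) = φ' p (w.comp (M.map h)) := apply_s p (w.comp (M.map h))
    _ = φ' q w := φ.app_map (p := OrderDual.toDual q) (q := OrderDual.toDual p) h w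
    _ = w (s q) := (apply_s q w).symm

end Preorder

section Image

variable {k : Type} [Field k]

/-- The image in `M_p` of the largest value of `M` below both `p` and `q`. For `q ≤ p` this is the
image of `M_q → M_p`; allowing any `q` gives a monotone family defined on all of `P`, equal to `⊤`
above `p`. -/
def imageAt {P : Type} [SemilatticeInf P] (M : PersistenceModule k P) (p q : P) :
    Submodule k (M.V p) :=
  LinearMap.range (M.map (inf_le_right : q ⊓ p ≤ p))

section SemilatticeInf

variable {P : Type} [SemilatticeInf P] (M : PersistenceModule k P)

theorem imageAt_le_of_inf_le {p q r : P} (h : q ⊓ p ≤ r) : imageAt M p q ≤ imageAt M p r :=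
  M.range_map_le (le_inf h inf_le_right) inf_le_right

theorem imageAt_mono (p : P) : Monotone (imageAt M p) :=
  fun _ _ h => imageAt_le_of_inf_le M (inf_le_left.trans h)

theorem imageAt_of_le {p q : P} (h : q ≤ p) : imageAt M p q = LinearMap.range (M.map h) :=
  le_antisymm (M.range_map_le inf_le_left h) (M.range_map_le (le_inf le_rfl h) inf_le_right)

theorem imageAt_eq_top_of_le {p q : P} (h : p ≤ q) : imageAt M p q = ⊤ := by
  refine top_le_iff.1 (le_trans ?_ (imageAt_mono M p h))
  rw [imageAt_of_le M le_rfl, M.map_refl, LinearMap.range_id]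

theorem imageAt_le_comap {p q : P} (h : p ≤ q) (r : P) :
    imageAt M p r ≤ (imageAt M q r).comap (M.map h) := by
  rintro _ ⟨u, rfl⟩
  refine ⟨M.map (inf_le_inf_left r h) u, ?_⟩
  rw [M.map_map_apply, M.map_map_apply]

/-- The subfunctor of `M` generated by the values of `M` at points lying below a point of `A`. -/
def generatedBelow (A : Set P) : Subfunctor M where
  carrier p := ⨆ q : A, imageAt M p q
  le_comap h := iSup_le fun q =>
    (imageAt_le_comap M h q).trans (Submodule.comap_mono (le_iSup_of_le q le_rfl))

theorem generatedBelow_eq_top {A : Set P} {p : P} (hp : p ∈ A) :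
    (generatedBelow M A).carrier p = ⊤ :=
  top_le_iff.1 ((imageAt_eq_top_of_le M le_rfl).ge.trans
    (le_iSup (fun q : A => imageAt M p q) ⟨p, hp⟩))

theorem generatedBelow_union (A B : Set P) (p : P) : (generatedBelow M (A ∪ B)).carrier p =
    (generatedBelow M A).carrier p ⊔ (generatedBelow M B).carrier p := by
  simp only [generatedBelow, iSup_subtype, iSup_union]

end SemilatticeInf

theorem mem_generatedBelow_of_supClosed {P : Type} [Lattice P] (M : PersistenceModule k P)
    {A : Set P} (hA : SupClosed A) (hne : A.Nonempty) {p : P} {v : M.V p} :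
    v ∈ (generatedBelow M A).carrier p ↔ ∃ q ∈ A, v ∈ imageAt M p q := by
  have : Nonempty A := hne.to_subtype
  have directed : Directed (· ≤ ·) fun q : A => imageAt M p q :=
    (directedOn_iff_directed.1 hA.directedOn).mono_comp (· ≤ ·) (imageAt_mono M p)
  exact (Submodule.mem_iSup_of_directed _ directed).trans
    (by simp only [Subtype.exists, exists_prop])

end Image

section Product

variable {k : Type} [Field k] {S T : Type} [LinearOrder S] [LinearOrder T]
  {M : PersistenceModule k (S × T)}

theorem exists_mem_imageAt_sup_of_mem_generatedBelow {JS : Set S} {JT : Set T} (hS : JSᶜ.Nonempty)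
    (hT : JTᶜ.Nonempty) {x : S} {y : T} {v : M.V (x, y)}
    (hv : v ∈ (generatedBelow M (JS ×ˢ JT)ᶜ).carrier (x, y)) :
    ∃ s ∉ JS, ∃ t ∉ JT, v ∈ imageAt M (x, y) (s, y) ⊔ imageAt M (x, y) (x, t) := by
  obtain ⟨s₀, hs₀⟩ := hS
  obtain ⟨t₀, ht₀⟩ := hT
  rw [Set.compl_prod_eq_union, generatedBelow_union] at hv
  obtain ⟨u, hu, w, hw, rfl⟩ := Submodule.mem_sup.1 hv
  obtain ⟨⟨s, t'⟩, ⟨hs, -⟩, hu⟩ := (mem_generatedBelow_of_supClosed M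
    ((LinearOrder.supClosed JSᶜ).prod supClosed_univ) ⟨(s₀, y), hs₀, trivial⟩).1 hu
  obtain ⟨⟨s', t⟩, ⟨-, ht⟩, hw⟩ := (mem_generatedBelow_of_supClosed M
    (supClosed_univ.prod (LinearOrder.supClosed JTᶜ)) ⟨(x, t₀), trivial, ht₀⟩).1 hw
  have hsy : (s, t') ⊓ (x, y) ≤ (s, y) := ⟨inf_le_left, inf_le_right⟩
  have hxt : (s', t) ⊓ (x, y) ≤ (x, t) := ⟨inf_le_right, inf_le_left⟩
  exact ⟨s, hs, t, ht, Submodule.add_mem_sup (imageAt_le_of_inf_le M hsy hu)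
    (imageAt_le_of_inf_le M hxt hw)⟩

theorem MiddleExact.imageAt_inf_imageAt_le (hM : MiddleExact M) {s x : S} {t y : T} (hs : s ≤ x)
    (ht : t ≤ y) :
    imageAt M (x, y) (s, y) ⊓ imageAt M (x, y) (x, t) ≤ imageAt M (x, y) (s, t) := by
  rw [imageAt_of_le M (⟨hs, le_rfl⟩ : (s, y) ≤ (x, y)),
    imageAt_of_le M (⟨le_rfl, ht⟩ : (x, t) ≤ (x, y)),
    imageAt_of_le M (⟨hs, ht⟩ : (s, t) ≤ (x, y))]
  rintro v ⟨⟨b, hb⟩, c, hc⟩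
  obtain ⟨a, rfl, -⟩ := hM s x t y hs ht b c (hb.trans hc.symm)
  exact ⟨a, by rw [← hb, M.map_map_apply]⟩

theorem MiddleExact.comap_imageAt_sup_imageAt_le (hM : MiddleExact M) {s x x' : S} {t y y' : T}
    (hs : s ≤ x) (hx : x ≤ x') (ht : t ≤ y) (hy : y ≤ y') :
    (imageAt M (x', y') (s, y') ⊔ imageAt M (x', y') (x', t)).comap
        (M.map (⟨hx, hy⟩ : (x, y) ≤ (x', y'))) ≤
      imageAt M (x, y) (s, y) ⊔ imageAt M (x, y) (x, t) := by
  rw [imageAt_of_le M (⟨hs.trans hx, le_rfl⟩ : (s, y') ≤ (x', y')),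
    imageAt_of_le M (⟨le_rfl, ht.trans hy⟩ : (x', t) ≤ (x', y')),
    imageAt_of_le M (⟨hs, le_rfl⟩ : (s, y) ≤ (x, y)),
    imageAt_of_le M (⟨le_rfl, ht⟩ : (x, t) ≤ (x, y))]
  intro m hm
  obtain ⟨_, ⟨u, rfl⟩, _, ⟨v, rfl⟩, huv⟩ := Submodule.mem_sup.1 hm
  obtain ⟨w, hw, -⟩ := hM x x' t y' hx (ht.trans hy)
    (M.map (⟨le_rfl, hy⟩ : (x, y) ≤ (x, y')) m - M.map (⟨hs, le_rfl⟩ : (s, y') ≤ (x, y')) u) v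
    (by rw [map_sub, M.map_map_apply, M.map_map_apply, ← huv, add_sub_cancel_left])
  obtain ⟨z, -, hz⟩ := hM s x y y' hs hy u (m - M.map (⟨le_rfl, ht⟩ : (x, t) ≤ (x, y)) w)
    (by rw [map_sub, M.map_map_apply, hw, sub_sub_cancel])
  exact Submodule.mem_sup.2 ⟨_, ⟨z, rfl⟩, _, ⟨w, rfl⟩, by rw [hz, sub_add_cancel]⟩

end Product

section Block

variable {k : Type} [Field k] {S T : Type} [LinearOrder S] [LinearOrder T]
  {M : PersistenceModule k (S × T)} {x : S} {y : T} {a : S} {b : T}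

theorem imageAt_fst_mono (M : PersistenceModule k (S × T)) (x : S) (y : T) :
    Monotone fun s => imageAt M (x, y) (s, y) :=
  fun _ _ h => imageAt_mono M (x, y) ⟨h, le_rfl⟩

theorem imageAt_snd_mono (M : PersistenceModule k (S × T)) (x : S) (y : T) :
    Monotone fun t => imageAt M (x, y) (x, t) :=
  fun _ _ h => imageAt_mono M (x, y) ⟨le_rfl, h⟩

variable (M x y b) in
/-- The abscissae `s` for which the images of `M_(s,y)` and `M_(x,b)` span `M_(x,y)`. -/
def spanningFst : Set S := {s | imageAt M (x, y) (s, y) ⊔ imageAt M (x, y) (x, b) = ⊤}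

variable (M x y a) in
/-- The ordinates `t` for which the images of `M_(x,t)` and `M_(a,y)` span `M_(x,y)`. -/
def spanningSnd : Set T := {t | imageAt M (x, y) (x, t) ⊔ imageAt M (x, y) (a, y) = ⊤}

theorem isFilter_spanningFst : IsFilter (spanningFst M x y b) :=
  isFilter_setOf_sup_eq_top (imageAt_fst_mono M x y) _

theorem isFilter_spanningSnd : IsFilter (spanningSnd M x y a) :=
  isFilter_setOf_sup_eq_top (imageAt_snd_mono M x y) _

theorem mem_spanningFst_self : x ∈ spanningFst M x y b :=
  top_le_iff.1 ((imageAt_eq_top_of_le M le_rfl).ge.trans le_sup_left)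

theorem mem_spanningSnd_self : y ∈ spanningSnd M x y a :=
  top_le_iff.1 ((imageAt_eq_top_of_le M le_rfl).ge.trans le_sup_left)

/-- Indices `a`, `b` for which the images of `M_(a,y)` and `M_(x,b)` form a critical pair in
`M_(x,y)`: the corner data from which the block is read off. -/
abbrev IsCorner (M : PersistenceModule k (S × T)) (x : S) (y : T) (a : S) (b : T) : Prop :=
  IsCriticalPair (fun s => imageAt M (x, y) (s, y)) (fun t => imageAt M (x, y) (x, t)) a b

theorem exists_isCorner [FiniteDimensional k (M.V (x, y))] {s : S} {t : T} (hs : s ≤ x)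
    (ht : t ≤ y)
    (hns : ¬ Function.Surjective (fun mm : M.V (s, y) × M.V (x, t) =>
      M.map (show (s, y) ≤ (x, y) from ⟨hs, le_refl y⟩) mm.1 -
      M.map (show (x, t) ≤ (x, y) from ⟨le_refl x, ht⟩) mm.2)) :
    ∃ a b, IsCorner M x y a b := by
  refine exists_isCriticalPair (imageAt_fst_mono M x y) (imageAt_snd_mono M x y)
    (s := s) (t := t) fun htop => hns fun v => ?_
  rw [imageAt_of_le M (⟨hs, le_rfl⟩ : (s, y) ≤ (x, y)),
    imageAt_of_le M (⟨le_rfl, ht⟩ : (x, t) ≤ (x, y))] at htop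
  obtain ⟨_, ⟨u, rfl⟩, _, ⟨w, rfl⟩, huw⟩ :=
    Submodule.mem_sup.1 (htop.ge (Submodule.mem_top (x := v)))
  exact ⟨(u, -w), by simp only [map_neg, sub_neg_eq_add, huw]⟩

namespace IsCorner

theorem notMem_fst (h : IsCorner M x y a b) : a ∉ spanningFst M x y b :=
  h.sup_ne_top

theorem notMem_snd (h : IsCorner M x y a b) : b ∉ spanningSnd M x y a :=
  fun hb => h.sup_ne_top ((sup_comm _ _).trans hb)

theorem map_notMem_generatedBelow (h : IsCorner M x y a b) (hM : MiddleExact M)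
    {m : M.V (x, y)} (hm : m ∉ imageAt M (x, y) (a, y) ⊔ imageAt M (x, y) (x, b))
    (e : S × T) (he : (x, y) ≤ e) : M.map he m ∉
      (generatedBelow M (spanningFst M x y b ×ˢ spanningSnd M x y a)ᶜ).carrier e := by
  obtain ⟨x', y'⟩ := e
  intro hmem
  obtain ⟨s, hs, t, ht, hst⟩ := exists_mem_imageAt_sup_of_mem_generatedBelow
    ⟨a, h.notMem_fst⟩ ⟨b, h.notMem_snd⟩ hmem
  have hsx : s ≤ x := isFilter_spanningFst.le_of_notMem_of_mem hs mem_spanningFst_self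
  have hty : t ≤ y := isFilter_spanningSnd.le_of_notMem_of_mem ht mem_spanningSnd_self
  exact hm (sup_le (h.left_le s hs) (h.right_le t ht)
    (hM.comap_imageAt_sup_imageAt_le hsx he.1 hty he.2 hst))

theorem exists_functional (h : IsCorner M x y a b) (hM : MiddleExact M) :
    ∃ f : Functional M,
      (∀ p ∉ spanningFst M x y b ×ˢ spanningSnd M x y a, f.app p = 0) ∧ f.app (x, y) ≠ 0 := by
  obtain ⟨m, hm⟩ := SetLike.exists_not_mem_of_ne_top _ h.sup_ne_top
  obtain ⟨f, hfK, hfm⟩ := Subfunctor.exists_functional _ (h.map_notMem_generatedBelow hM hm)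
  refine ⟨f, fun p hp => LinearMap.ker_eq_top.1 (top_le_iff.1 ?_), fun h0 => ?_⟩
  · exact (generatedBelow_eq_top M hp).ge.trans (hfK p)
  · exact one_ne_zero (α := k) (hfm.symm.trans (LinearMap.congr_fun h0 m))

theorem app_comp_map_ne_zero (h : IsCorner M x y a b) (hM : MiddleExact M)
    {f : Functional M}
    (hf : ∀ p ∉ spanningFst M x y b ×ˢ spanningSnd M x y a, f.app p = 0)
    (hfd : f.app (x, y) ≠ 0) {p : S × T}
    (hp : p ∈ spanningFst M x y b ×ˢ spanningSnd M x y a) (hpd : p ≤ (x, y)) :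
    (f.app (x, y)).comp (M.map hpd) ≠ 0 := by
  obtain ⟨s, t⟩ := p
  have imageAt_le_ker : ∀ {q}, q ≤ (x, y) → f.app q = 0 →
      imageAt M (x, y) q ≤ LinearMap.ker (f.app (x, y)) := by
    rintro q hq h0
    rw [imageAt_of_le M hq, LinearMap.range_le_ker_iff]
    exact LinearMap.ext fun v => (f.app_map hq v).trans (LinearMap.congr_fun h0 v)
  have hax : a ≤ x := isFilter_spanningFst.le_of_notMem_of_mem h.notMem_fst mem_spanningFst_self
  have hby : b ≤ y := isFilter_spanningSnd.le_of_notMem_of_mem h.notMem_snd mem_spanningSnd_self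
  have hbt : b ≤ t := isFilter_spanningSnd.le_of_notMem_of_mem h.notMem_snd hp.2
  have spans := inf_sup_sup_eq_top hp.1 ((sup_comm _ _).trans hp.2) (imageAt_snd_mono M x y hbt)
  intro h0
  refine hfd (LinearMap.ker_eq_top.1 (top_le_iff.1 (spans.ge.trans (sup_le ?_ (sup_le ?_ ?_)))))
  · refine (hM.imageAt_inf_imageAt_le hpd.1 hpd.2).trans ?_
    rwa [imageAt_of_le M hpd, LinearMap.range_le_ker_iff]
  · exact imageAt_le_ker ⟨hax, le_rfl⟩ (hf _ fun hmem => h.notMem_fst hmem.1)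
  · exact imageAt_le_ker ⟨le_rfl, hby⟩ (hf _ fun hmem => h.notMem_snd hmem.2)

end IsCorner

end Block

end PMod

open PMod in
/-- Lemma 4.4: an indecomposable pointwise finite-dimensional middle exact module with
a non-surjective difference map is a block module of type (bb). -/
theorem stmt14 {k : Type} [Field k] {S T : Type} [LinearOrder S] [LinearOrder T]
    (M : PersistenceModule k (S × T)) (hfd : ∀ p, FiniteDimensional k (M.V p))
    (hme : MiddleExact M) (hind : Indecomposable M)
    (x x' : S) (hx : x ≤ x') (y y' : T) (hy : y ≤ y')
    (hns : ¬ Function.Surjective (fun mm : M.V (x, y') × M.V (x', y) =>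
      M.map (show (x, y') ≤ (x', y') from ⟨hx, le_refl y'⟩) mm.1 -
      M.map (show (x', y) ≤ (x', y') from ⟨le_refl x', hy⟩) mm.2)) :
    ∃ (JS : Set S) (JT : Set T)
      (h : (IsIntervalLin JS ∧ IsFilter JS) ∧ (IsIntervalLin JT ∧ IsFilter JT)),
      Isomorphic M (intervalModule k (JS ×ˢ JT) (h.1.1.2.prod h.2.1.2)) := by
  obtain ⟨a, b, hab⟩ := exists_isCorner hx hy hns
  obtain ⟨f, hf, hfne⟩ := hab.exists_functional hme
  let JS := spanningFst M x' y' b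
  let JT := spanningSnd M x' y' a
  have hJS : IsFilter JS := isFilter_spanningFst
  have hJT : IsFilter JT := isFilter_spanningSnd
  have : IsCodirectedOrder ↥(JS ×ˢ JT) := isCodirectedOrder_of_infClosed
    ((LinearOrder.infClosed JS).prod (LinearOrder.infClosed JT))
  let d : ↥(JS ×ˢ JT) := ⟨(x', y'), mem_spanningFst_self, mem_spanningSnd_self⟩
  obtain ⟨s, hs⟩ := exists_sectionOn M (fun p => hfd p) (d := d)
    fun p hpd => hab.app_comp_map_ne_zero hme hf hfne p.2 hpd
  exact ⟨JS, JT, ⟨⟨⟨⟨x', d.2.1⟩, hJS.isConvex⟩, hJS⟩, ⟨⟨y', d.2.2⟩, hJT.isConvex⟩, hJT⟩,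
    hind.isomorphic_intervalModule _ (hJS.prod hJT) f hf s (d := d) hs⟩
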